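/- arXiv:0906.5491 — 5 statements merged into one kernel-verified Lean document; each statement's English description precedes it below -/
import Mathlib

section
/- Let G = ⟨x, y | x y² x⁻¹ = y³⟩ and consider the generating family (x, y, z) of G where z maps to y⁴. Then the relation module M(G, {x, y, z}) is a free ℤG-module of rank 2; indeed it is freely generated by the images of the relators x y² x⁻¹ y⁻³ and z y⁻⁴. -/
/-- The single relator `x y² x⁻¹ y⁻³` in the free group on two generators. -/
def bsRels : Set (FreeGroup (Fin 2)) :=
  {FreeGroup.of 0 * FreeGroup.of 1 ^ 2 * (FreeGroup.of 0)⁻¹ * (FreeGroup.of 1 ^ 3)⁻¹}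

/-- The Baumslag–Solitar group `G = ⟨x, y | x y² x⁻¹ = y³⟩`. -/
abbrev BSGroup := PresentedGroup bsRels

/-- `x ∈ G`. -/
def bsX : BSGroup := PresentedGroup.of 0

/-- `y ∈ G`. -/
def bsY : BSGroup := PresentedGroup.of 1

/-- The epimorphism `F(x,y,z) → G`, `x ↦ x`, `y ↦ y`, `z ↦ y⁴`. -/
def bsPi3 : FreeGroup (Fin 3) →* BSGroup :=
  FreeGroup.lift (fun i => if i = 0 then bsX else if i = 1 then bsY else bsY ^ 4)

/-- The relator `x y² x⁻¹ y⁻³ ∈ F(x,y,z)`. -/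
def word1 : FreeGroup (Fin 3) :=
  FreeGroup.of 0 * FreeGroup.of 1 ^ 2 * (FreeGroup.of 0)⁻¹ * (FreeGroup.of 1 ^ 3)⁻¹

/-- The relator `z y⁻⁴ ∈ F(x,y,z)`. -/
def word2 : FreeGroup (Fin 3) := FreeGroup.of 2 * (FreeGroup.of 1 ^ 4)⁻¹

theorem bsY_pow_inj (n : ℕ) (hn : bsY ^ n = 1) : n = 0 := by
  let f : Fin 2 → Equiv.Perm ℚ := fun i =>
    if i = 0 then Equiv.mulLeft₀ (3/2 : ℚ) (by norm_num) else Equiv.addRight (1:ℚ)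
  have hf : ∀ r ∈ bsRels, FreeGroup.lift f r = 1 := by
    intro r hr
    rw [bsRels, Set.mem_singleton_iff] at hr
    subst hr
    simp only [map_mul, map_inv, map_pow, FreeGroup.lift_apply_of]
    rw [mul_inv_eq_one, mul_inv_eq_iff_eq_mul]
    ext t
    simp [f, pow_succ, Equiv.Perm.mul_apply]
    ring
  have h := congrArg (PresentedGroup.toGroup hf) hn
  rw [map_pow, map_one, bsY, PresentedGroup.toGroup.of] at h
  have key : ∀ m : ℕ, ((f 1) ^ m) 0 = (m : ℚ) := by
    intro m
    induction m with
    | zero => simp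
    | succ k ih => rw [pow_succ', Equiv.Perm.mul_apply, ih]; simp [f]
  have := key n
  rw [h] at this
  simp at this
  exact_mod_cast this.symm

theorem mul_one_sub_inj {G : Type*} [Group G] (g : G) (hg : ∀ n : ℕ, g ^ n = 1 → n = 0)
    (a : MonoidAlgebra ℤ G) (h : a * (1 - MonoidAlgebra.of ℤ G g) = 0) : a = 0 := by
  rw [mul_sub, mul_one, sub_eq_zero] at h
  have h1 : ∀ z, a.coeff (z * g) = a.coeff z := by
    intro z
    conv_lhs => rw [h]
    rw [MonoidAlgebra.of_apply, MonoidAlgebra.mul_single_apply]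
    simp
  have h2 : ∀ (n : ℕ) z, a.coeff (z * g ^ n) = a.coeff z := by
    intro n
    induction n with
    | zero => simp
    | succ k ih => intro z; rw [pow_succ, ← mul_assoc, h1, ih]
  by_contra hne
  have ⟨z, hz⟩ : ∃ z, a.coeff z ≠ 0 := by
    by_contra hc
    push Not at hc
    exact hne (by ext z; simpa using hc z)
  have hinj : Function.Injective (fun n : ℕ => z * g ^ n) := by
    have hford : ¬ IsOfFinOrder g := by
      rw [isOfFinOrder_iff_pow_eq_one]
      rintro ⟨n, hn, h⟩
      exact hn.ne' (hg n h)
    exact (mul_right_injective z).comp (injective_pow_iff_not_isOfFinOrder.2 hford)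
  refine Set.infinite_of_injective_forall_mem (s := {w | a.coeff w ≠ 0}) hinj ?_ ?_
  · intro n
    simp only [Set.mem_setOf_eq, h2]
    exact hz
  · exact (Finsupp.finite_support _)

/-- Action of the free group by affine maps. -/
noncomputable def affAct (c : Fin 3 → MonoidAlgebra ℤ BSGroup) :
    FreeGroup (Fin 3) →* Equiv.Perm (MonoidAlgebra ℤ BSGroup) :=
  FreeGroup.lift fun i =>
    { toFun := fun m => MonoidAlgebra.of ℤ _ (bsPi3 (FreeGroup.of i)) * m + c i
      invFun := fun m => MonoidAlgebra.of ℤ _ (bsPi3 (FreeGroup.of i))⁻¹ * (m - c i)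
      left_inv := fun m => by
        simp only [add_sub_cancel_right, ← mul_assoc, ← map_mul, inv_mul_cancel, map_one, one_mul]
      right_inv := fun m => by
        simp only [← mul_assoc, ← map_mul, mul_inv_cancel, map_one, one_mul, sub_add_cancel] }

theorem affAct_of (c) (i) (m) : affAct c (FreeGroup.of i) m =
    MonoidAlgebra.of ℤ _ (bsPi3 (FreeGroup.of i)) * m + c i := by
  rw [affAct, FreeGroup.lift_apply_of]; rfl

theorem affAct_apply (c) (f) : ∀ m, affAct c f m =
    MonoidAlgebra.of ℤ _ (bsPi3 f) * m + affAct c f 0 := by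
  induction f using FreeGroup.induction_on with
  | C1 => intro m; rw [map_one, map_one, map_one]; simp
  | of i => intro m; rw [affAct_of, affAct_of]; simp
  | inv_of i ih =>
    intro m
    rw [map_inv, Equiv.Perm.inv_eq_iff_eq, affAct_of, map_inv, mul_add, ← mul_assoc, ← map_mul,
      mul_inv_cancel, map_one, one_mul, add_assoc, ← affAct_of, ← Equiv.Perm.mul_apply, mul_inv_cancel, Equiv.Perm.one_apply, add_zero]
  | mul x y hx hy =>
    intro m
    rw [map_mul, Equiv.Perm.mul_apply, Equiv.Perm.mul_apply, hx, hy, hx (affAct c y 0), map_mul,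
      map_mul, mul_add, mul_assoc, add_assoc]

theorem affAct_ker (c) (r : bsPi3.ker) (m) : affAct c r m = m + affAct c r 0 := by
  rw [affAct_apply, MonoidHom.mem_ker.1 r.2, map_one, one_mul]

/-- Fox derivative on the relation module, additive version. -/
noncomputable def foxAdd (c : Fin 3 → MonoidAlgebra ℤ BSGroup) :
    Additive (Abelianization ↥bsPi3.ker) →+ MonoidAlgebra ℤ BSGroup :=
  MonoidHom.toAdditiveLeft (Abelianization.lift
    { toFun := fun r : bsPi3.ker => Multiplicative.ofAdd (affAct c r 0)
      map_one' := by simp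
      map_mul' := fun r s => by
        rw [← ofAdd_add, Subgroup.coe_mul, map_mul, Equiv.Perm.mul_apply, affAct_ker, add_comm] })

theorem foxAdd_of (c) (r : bsPi3.ker) :
    foxAdd c (Additive.ofMul (Abelianization.of r)) = affAct c r 0 := rfl

theorem affAct_conj (c) (f) (r : bsPi3.ker) : affAct c (f * r * f⁻¹) 0 =
    MonoidAlgebra.of ℤ _ (bsPi3 f) * affAct c r 0 := by
  have : affAct c f (affAct c f⁻¹ 0) = 0 := by
    rw [map_inv, ← Equiv.Perm.mul_apply, mul_inv_cancel, Equiv.Perm.one_apply]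
  rw [map_mul, map_mul, Equiv.Perm.mul_apply, Equiv.Perm.mul_apply, affAct_ker, affAct_apply,
    mul_add, add_right_comm, ← affAct_apply, this, zero_add]

theorem bsPi3_surj : Function.Surjective bsPi3 := by
  have : bsPi3.comp (FreeGroup.lift fun i : Fin 2 => FreeGroup.of i.castSucc) =
      PresentedGroup.mk bsRels := by
    ext i
    fin_cases i <;> simp [bsPi3, bsX, bsY] <;> rfl
  intro g
  obtain ⟨w, rfl⟩ := PresentedGroup.mk_surjective bsRels g
  rw [← this]
  exact ⟨_, rfl⟩

theorem ker_le : bsPi3.ker ≤ Subgroup.normalClosure {word1, word2} := by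
  set N := Subgroup.normalClosure ({word1, word2} : Set (FreeGroup (Fin 3))) with hN
  have h1 : (QuotientGroup.mk' N) word1 = 1 :=
    (QuotientGroup.eq_one_iff _).2 (Subgroup.subset_normalClosure (by simp))
  have h2 : (QuotientGroup.mk' N) word2 = 1 :=
    (QuotientGroup.eq_one_iff _).2 (Subgroup.subset_normalClosure (by simp))
  let f : Fin 2 → FreeGroup (Fin 3) ⧸ N := fun i => QuotientGroup.mk' N (FreeGroup.of i.castSucc)
  have hf : ∀ r ∈ bsRels, FreeGroup.lift f r = 1 := by
    intro r hr
    rw [bsRels, Set.mem_singleton_iff] at hr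
    subst hr
    refine Eq.trans ?_ h1
    delta word1
    simp only [map_mul, map_inv, map_pow, FreeGroup.lift_apply_of]
    rfl
  have hc : (PresentedGroup.toGroup hf).comp bsPi3 = QuotientGroup.mk' N := by
    apply FreeGroup.ext_hom
    intro i
    rw [MonoidHom.comp_apply, bsPi3, FreeGroup.lift_apply_of]
    fin_cases i
    · exact PresentedGroup.toGroup.of hf
    · exact PresentedGroup.toGroup.of hf
    · change PresentedGroup.toGroup hf (bsY ^ 4) = _
      have h2 : QuotientGroup.mk' N (FreeGroup.of 2 * (FreeGroup.of 1 ^ 4)⁻¹) = 1 := h2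
      rw [map_mul, map_inv, mul_inv_eq_one] at h2
      rw [map_pow, bsY, PresentedGroup.toGroup.of]
      exact (h2.trans (map_pow _ _ _)).symm
  intro r hr
  rw [← QuotientGroup.ker_mk' N, MonoidHom.mem_ker, ← hc, MonoidHom.comp_apply,
    MonoidHom.mem_ker.1 hr, map_one]

/-- For `G = ⟨x, y | x y² x⁻¹ = y³⟩` and the generating family `(x, y, z)` with
`z = y⁴`, the relation module `M(G,{x,y,z})` (the abelianization of
`R = ker (F(x,y,z) → G)` with `G` acting by conjugation) is a free
`ℤG`-module of rank 2, freely generated by the images of the relators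
`x y² x⁻¹ y⁻³` and `z y⁻⁴`. -/
theorem relationModule_three_generators_free_of_rank_two
    [Module (MonoidAlgebra ℤ BSGroup) (Additive (Abelianization ↥bsPi3.ker))]
    (hact : ∀ (f : FreeGroup (Fin 3)) (r r' : ↥bsPi3.ker),
      (r' : FreeGroup (Fin 3)) = f * ↑r * f⁻¹ →
      MonoidAlgebra.of ℤ BSGroup (bsPi3 f) • Additive.ofMul (Abelianization.of r) =
        Additive.ofMul (Abelianization.of r'))
    (ρ₁ ρ₂ : ↥bsPi3.ker)
    (hρ₁ : (ρ₁ : FreeGroup (Fin 3)) = word1) (hρ₂ : (ρ₂ : FreeGroup (Fin 3)) = word2) :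
    ∃ e : (MonoidAlgebra ℤ BSGroup × MonoidAlgebra ℤ BSGroup)
        ≃ₗ[MonoidAlgebra ℤ BSGroup] Additive (Abelianization ↥bsPi3.ker),
      e (1, 0) = Additive.ofMul (Abelianization.of ρ₁) ∧
      e (0, 1) = Additive.ofMul (Abelianization.of ρ₂) := by
  have hlin : ∀ (c) (a : MonoidAlgebra ℤ BSGroup) (m : Additive (Abelianization ↥bsPi3.ker)),
      foxAdd c (a • m) = a * foxAdd c m := by
    intro c a m
    induction a using MonoidAlgebra.induction_on with
    | of g =>
      obtain ⟨f, rfl⟩ := bsPi3_surj g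
      obtain ⟨r, hr⟩ := QuotientGroup.mk_surjective m.toMul
      obtain rfl : m = Additive.ofMul (Abelianization.of r) := hr.symm
      rw [hact f r ⟨f * r * f⁻¹, (MonoidHom.normal_ker bsPi3).conj_mem _ r.2 f⟩ rfl, foxAdd_of,
        foxAdd_of, affAct_conj]
    | add a b ha hb => rw [add_smul, map_add, ha, hb, add_mul]
    | smul n a ha => rw [smul_assoc, map_zsmul, ha, smul_mul_assoc]
  let φ : (MonoidAlgebra ℤ BSGroup × MonoidAlgebra ℤ BSGroup)
        →ₗ[MonoidAlgebra ℤ BSGroup] Additive (Abelianization ↥bsPi3.ker) :=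
    (LinearMap.toSpanSingleton _ _ (Additive.ofMul (Abelianization.of ρ₁))).coprod
    (LinearMap.toSpanSingleton _ _ (Additive.ofMul (Abelianization.of ρ₂)))
  have hφ : ∀ a b, φ (a, b) = a • Additive.ofMul (Abelianization.of ρ₁) +
      b • Additive.ofMul (Abelianization.of ρ₂) := fun a b => by
    simp [φ]
  have p0 : bsPi3 (FreeGroup.of 0) = bsX := by simp [bsPi3]
  have p1 : bsPi3 (FreeGroup.of 1) = bsY := by simp [bsPi3]
  have hrel : bsX * bsY ^ 2 * bsX⁻¹ = bsY ^ 3 := by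
    have := MonoidHom.mem_ker.1 ρ₁.2
    rw [hρ₁, word1, map_mul, mul_eq_one_iff_eq_inv, map_inv, inv_inv] at this
    simpa [p0, p1] using this
  have hinj : Function.Injective φ := by
    rw [injective_iff_map_eq_zero]
    rintro ⟨a, b⟩ hab
    rw [hφ] at hab
    have key : ∀ c, a * affAct c word1 0 + b * affAct c word2 0 = 0 := by
      intro c
      have := congrArg (foxAdd c) hab
      rwa [map_add, hlin, hlin, map_zero, foxAdd_of, foxAdd_of, hρ₁, hρ₂] at this
    have fix : ∀ (c : Fin 3 → MonoidAlgebra ℤ BSGroup), c 1 = 0 →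
        ∀ n : ℕ, affAct c (FreeGroup.of 1 ^ n)⁻¹ 0 = 0 := by
      intro c hc n
      rw [map_inv, Equiv.Perm.inv_eq_iff_eq, map_pow]
      induction n with
      | zero => simp
      | succ k ih => rw [pow_succ, Equiv.Perm.mul_apply, affAct_of, hc, mul_zero, add_zero, ← ih]
    have fix' : ∀ (c : Fin 3 → MonoidAlgebra ℤ BSGroup), c 1 = 0 →
        ∀ n : ℕ, affAct c (FreeGroup.of 1 ^ n) 0 = 0 := by
      intro c hc n
      have := fix c hc n
      rwa [map_inv, Equiv.Perm.inv_eq_iff_eq, eq_comm] at this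
    have w2 : ∀ c : Fin 3 → MonoidAlgebra ℤ BSGroup, c 1 = 0 → affAct c word2 0 = c 2 := by
      intro c hc
      rw [word2, map_mul, Equiv.Perm.mul_apply, fix c hc, affAct_of, mul_zero, zero_add]
    have w1 : ∀ c : Fin 3 → MonoidAlgebra ℤ BSGroup, c 1 = 0 → affAct c word1 0 =
        (1 - MonoidAlgebra.of ℤ _ (bsY ^ 3)) * c 0 := by
      intro c hc
      have hx : affAct c (FreeGroup.of 0)⁻¹ 0 = - (MonoidAlgebra.of ℤ _ bsX⁻¹ * c 0) := by
        rw [map_inv, Equiv.Perm.inv_eq_iff_eq, affAct_of, p0, mul_neg, ← mul_assoc, ← map_mul,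
          mul_inv_cancel, map_one, one_mul, neg_add_cancel]
      rw [word1, map_mul, Equiv.Perm.mul_apply, fix c hc, map_mul, Equiv.Perm.mul_apply, hx,
        map_mul, Equiv.Perm.mul_apply, affAct_apply c (FreeGroup.of 1 ^ 2), fix' c hc, affAct_of,
        p0, map_pow, p1, ← hrel, map_mul, map_mul]
      noncomm_ring
    have hb : b = 0 := by
      have := key ![0, 0, 1]
      rw [w1 _ rfl, w2 _ rfl] at this
      simpa using this
    have ha : a = 0 := by
      have := key ![1, 0, 0]
      rw [w1 _ rfl, w2 _ rfl] at this
      refine mul_one_sub_inj (bsY ^ 3) ?_ a (by simpa using this)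
      intro n hn
      rw [← pow_mul] at hn
      have := bsY_pow_inj _ hn
      omega
    rw [ha, hb]; rfl
  have hsurj : Function.Surjective φ := by
    let A : Subgroup bsPi3.ker :=
      (AddSubgroup.toSubgroup' (LinearMap.range φ).toAddSubgroup).comap Abelianization.of
    have hA : ∀ r, r ∈ A ↔ Additive.ofMul (Abelianization.of r) ∈ LinearMap.range φ :=
      fun r => Iff.rfl
    have hn : (A.map bsPi3.ker.subtype).Normal := by
      constructor
      rintro _ ⟨r, hr, rfl⟩ f
      refine ⟨⟨f * r * f⁻¹, (MonoidHom.normal_ker bsPi3).conj_mem _ r.2 f⟩, ?_, rfl⟩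
      have hr' := (hA r).1 hr
      refine (hA _).2 ?_
      rw [← hact f r _ rfl]
      exact Submodule.smul_mem _ _ hr'
    have hle : Subgroup.normalClosure {word1, word2} ≤ A.map bsPi3.ker.subtype := by
      apply Subgroup.normalClosure_le_normal
      rintro w (rfl | rfl)
      · exact ⟨ρ₁, (hA _).2 ⟨(1, 0), by rw [hφ]; simp⟩, hρ₁⟩
      · exact ⟨ρ₂, (hA _).2 ⟨(0, 1), by rw [hφ]; simp⟩, hρ₂⟩
    intro m
    obtain ⟨r, hr⟩ := QuotientGroup.mk_surjective m.toMul
    obtain rfl : m = Additive.ofMul (Abelianization.of r) := hr.symm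
    obtain ⟨r', hr', h⟩ := hle (ker_le r.2)
    obtain rfl : r' = r := Subtype.ext h
    exact (hA _).1 hr'
  refine ⟨LinearEquiv.ofBijective φ (show Function.Bijective φ from ⟨hinj, hsurj⟩), ?_, ?_⟩
  · refine (hφ _ _).trans ?_; simp
  · refine (hφ _ _).trans ?_; simp
end

section
/- Let F = F(a ⊔ b) be the free group on the disjoint union of two families a and b, and let π : F → G be an epimorphism of groups. Assume that π restricted to the free subgroup F(b) generated by b is injective with image a subgroup Q (so Q is free with basis the image of b), and that G is the internal semidirect product H ⋊ Q, where H is the normal closure of π(a) in G. Let ā = { f a f⁻¹ : f ∈ F, a ∈ a }, so that the subgroup F(ā) generated by ā is the normal closure of a in F and is free with basis ā. Then the relation subgroup R = ker π is contained in F(ā) and equals the kernel of the restriction π′ : F(ā) → H; consequently the relation modules M(G, a ∪ b) and M(H, ā) coincide, and M(H, ā) is a ℤG-module with G acting by conjugation: (fR)·(s[R,R]) = (f s f⁻¹)[R,R] for f ∈ F, s ∈ R. -/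
/-- Conjugation action of the free group on the abelianized relation subgroup. -/
def conjAbHom {F : Type} [Group F] (R : Subgroup F) [R.Normal] :
    F →* AddMonoid.End (Additive (Abelianization R)) where
  toFun f := MonoidHom.toAdditive (Abelianization.map (MulAut.conjNormal (H := R) f).toMonoidHom)
  map_one' := by
    ext x
    obtain ⟨r, rfl⟩ := QuotientGroup.mk_surjective (s := commutator R) x
    change Additive.ofMul (Abelianization.of (MulAut.conjNormal (1 : F) r)) =
      Additive.ofMul (Abelianization.of r)
    rw [map_one, MulAut.one_apply]
  map_mul' f g := by
    ext x
    obtain ⟨r, rfl⟩ := QuotientGroup.mk_surjective (s := commutator R) x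
    change Additive.ofMul (Abelianization.of (MulAut.conjNormal (f * g) r)) =
      Additive.ofMul (Abelianization.of (MulAut.conjNormal f (MulAut.conjNormal g r)))
    rw [map_mul, MulAut.mul_apply]

theorem conjAbHom_apply {F : Type} [Group F] (R : Subgroup F) [R.Normal] (f : F) (r : R) :
    conjAbHom R f (Additive.ofMul (Abelianization.of r)) =
      Additive.ofMul (Abelianization.of (MulAut.conjNormal f r)) := rfl

theorem conjAbHom_mem {F : Type} [Group F] (R : Subgroup F) [R.Normal] (f : F) (hf : f ∈ R) :
    conjAbHom R f = 1 := by
  ext x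
  obtain ⟨r, rfl⟩ := QuotientGroup.mk_surjective (s := commutator R) x
  change conjAbHom R f (Additive.ofMul (Abelianization.of r)) = Additive.ofMul (Abelianization.of r)
  rw [conjAbHom_apply]
  have h : MulAut.conjNormal f r = (⟨f, hf⟩ : R) * r * (⟨f, hf⟩ : R)⁻¹ := by
    apply Subtype.ext
    simp
  congr 1
  rw [h, map_mul Abelianization.of, map_mul Abelianization.of, map_inv, mul_comm, inv_mul_cancel_left]

/-- Let `F = F(a ⊔ b)` be free on the disjoint union of two families, let
`π : F → G` be an epimorphism which is injective on the free subgroup `F(b)`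
(with image `Q`), and suppose `G` is the internal semidirect product `H ⋊ Q`,
where `H` is the normal closure of `π(a)` in `G` (i.e. `H ⊓ Q = ⊥` and
`H ⊔ Q = ⊤`, `H` being normal).  Let `N = F(ā)` be the normal closure of `a`
in `F`.  Then the relation subgroup `R = ker π` is contained in `N`; `π` maps
`N` onto `H`, so `R` is also the kernel of the restriction `π′ : F(ā) → H`
(hence `M(G, a ∪ b) = M(H, ā)`); and `M(H, ā) = R/[R,R]` carries a
`ℤG`-module structure with `G` acting by conjugation:
`(π f) • (s[R,R]) = (f s f⁻¹)[R,R]`. -/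
theorem relation_module_of_semidirect_decomposition
    {α β : Type} {G : Type} [Group G]
    (π : FreeGroup (α ⊕ β) →* G) (hπ : Function.Surjective π)
    (hinj : Function.Injective (π.comp (FreeGroup.map Sum.inr)))
    (Q : Subgroup G) (hQ : Q = (π.comp (FreeGroup.map Sum.inr)).range)
    (H : Subgroup G)
    (hH : H = Subgroup.normalClosure (Set.range fun a : α => π (FreeGroup.of (Sum.inl a))))
    (hdisj : H ⊓ Q = ⊥) (hjoin : H ⊔ Q = ⊤)
    (N : Subgroup (FreeGroup (α ⊕ β)))
    (hN : N = Subgroup.normalClosure (Set.range fun a : α => FreeGroup.of (Sum.inl a))) :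
    π.ker ≤ N ∧
    (∀ w ∈ N, π w ∈ H) ∧
    (∀ h ∈ H, ∃ w ∈ N, π w = h) ∧
    ∃ ρ : MonoidAlgebra ℤ G →+* AddMonoid.End (Additive (Abelianization ↥π.ker)),
      ∀ (f : FreeGroup (α ⊕ β)) (r r' : ↥π.ker),
        (r' : FreeGroup (α ⊕ β)) = f * ↑r * f⁻¹ →
        ρ (MonoidAlgebra.of ℤ G (π f)) (Additive.ofMul (Abelianization.of r)) =
          Additive.ofMul (Abelianization.of r') := by
  subst hN
  have h2 : ∀ w ∈ Subgroup.normalClosure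
      (Set.range fun a : α => (FreeGroup.of (Sum.inl a) : FreeGroup (α ⊕ β))), π w ∈ H := by
    have hn : H.Normal := hH ▸ Subgroup.normalClosure_normal
    have : Subgroup.normalClosure
      (Set.range fun a : α => (FreeGroup.of (Sum.inl a) : FreeGroup (α ⊕ β))) ≤ H.comap π := by
      apply Subgroup.normalClosure_le_normal
      rintro _ ⟨a, rfl⟩
      change π _ ∈ H
      rw [hH]
      exact Subgroup.subset_normalClosure ⟨a, rfl⟩
    exact this
  refine ⟨?_, h2, ?_, ?_⟩
  · intro w hw
    set N := Subgroup.normalClosure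
      (Set.range fun a : α => (FreeGroup.of (Sum.inl a) : FreeGroup (α ⊕ β))) with hN
    let p : FreeGroup (α ⊕ β) →* FreeGroup β := FreeGroup.lift (Sum.elim (fun _ => 1) FreeGroup.of)
    have key : (QuotientGroup.mk' N) =
        (QuotientGroup.mk' N).comp ((FreeGroup.map Sum.inr).comp p) := by
      ext x
      rcases x with a | b
      · have : (FreeGroup.of (Sum.inl a) : FreeGroup (α ⊕ β)) ∈ N :=
          Subgroup.subset_normalClosure ⟨a, rfl⟩
        simpa [p] using this
      · simp [p]
    have hk := DFunLike.congr_fun key w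
    have hmem : w⁻¹ * FreeGroup.map Sum.inr (p w) ∈ N := QuotientGroup.eq.1 hk
    have h3 := h2 _ hmem
    rw [map_mul, map_inv, MonoidHom.mem_ker.1 hw, inv_one, one_mul] at h3
    have h4 : π (FreeGroup.map Sum.inr (p w)) ∈ H ⊓ Q := ⟨h3, by rw [hQ]; exact ⟨p w, rfl⟩⟩
    rw [hdisj, Subgroup.mem_bot] at h4
    have h5 : p w = 1 := hinj (by simpa using h4)
    rw [h5, map_one, mul_one] at hmem
    exact inv_mem_iff.1 hmem
  · intro h hh
    rw [hH] at hh
    have := Subgroup.map_normalClosure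
      (Set.range fun a : α => (FreeGroup.of (Sum.inl a) : FreeGroup (α ⊕ β))) π hπ
    rw [← Set.range_comp] at this
    have hh' : h ∈ Subgroup.map π (Subgroup.normalClosure
      (Set.range fun a : α => (FreeGroup.of (Sum.inl a) : FreeGroup (α ⊕ β)))) := by
      rw [this]; exact hh
    exact hh'
  · have hwd : ∀ f g, π f = π g → conjAbHom π.ker f = conjAbHom π.ker g := by
      intro f g hfg
      have h1 : conjAbHom π.ker (f * g⁻¹) = 1 := conjAbHom_mem _ _ (by
        rw [MonoidHom.mem_ker, map_mul, map_inv, hfg, mul_inv_cancel])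
      calc conjAbHom π.ker f = conjAbHom π.ker (f * g⁻¹ * g) := by rw [inv_mul_cancel_right]
        _ = _ := by rw [map_mul, h1, one_mul]
    let θ : G →* AddMonoid.End (Additive (Abelianization π.ker)) :=
      { toFun := fun g => conjAbHom π.ker (Function.surjInv hπ g)
        map_one' := by
          rw [← map_one (conjAbHom π.ker)]
          apply hwd
          rw [Function.surjInv_eq hπ, map_one]
        map_mul' := fun x y => by
          rw [← map_mul]
          apply hwd
          simp only [map_mul, Function.surjInv_eq hπ] }
    refine ⟨(MonoidAlgebra.lift ℤ (AddMonoid.End (Additive (Abelianization π.ker))) G θ).toRingHom,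
      ?_⟩
    intro f r r' hr
    have h1 : (MonoidAlgebra.lift ℤ (AddMonoid.End (Additive (Abelianization π.ker))) G θ)
        (MonoidAlgebra.of ℤ G (π f)) = θ (π f) := MonoidAlgebra.lift_of _ _
    have h2 : θ (π f) = conjAbHom π.ker f := hwd _ _ (Function.surjInv_eq hπ _)
    have h3 : MulAut.conjNormal f r = r' := Subtype.ext (by rw [hr]; simp)
    change (MonoidAlgebra.lift ℤ (AddMonoid.End (Additive (Abelianization π.ker))) G θ)
        (MonoidAlgebra.of ℤ G (π f)) _ = _
    rw [h1, h2, conjAbHom_apply, h3]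
end

section
/- Let G = ⟨x, y | x y² x⁻¹ = y³⟩. Then the presented group ⟨ x, y, x′, y′ | x y² x⁻¹ = y³, x′ y′² x′⁻¹ = y′³, x = x′, y⁴ = y′⁴ ⟩ is isomorphic to G, via the map sending x ↦ x, y ↦ y, x′ ↦ x, y′ ↦ y. -/
/-- The relators `x y² x⁻¹ y⁻³`, `x′ y′² x′⁻¹ y′⁻³`, `x x′⁻¹`, `y⁴ y′⁻⁴` in the
free group on four generators `x = 0`, `y = 1`, `x′ = 2`, `y′ = 3`. -/
def doubledRels : Set (FreeGroup (Fin 4)) :=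
  {FreeGroup.of 0 * FreeGroup.of 1 ^ 2 * (FreeGroup.of 0)⁻¹ * (FreeGroup.of 1 ^ 3)⁻¹,
   FreeGroup.of 2 * FreeGroup.of 3 ^ 2 * (FreeGroup.of 2)⁻¹ * (FreeGroup.of 3 ^ 3)⁻¹,
   FreeGroup.of 0 * (FreeGroup.of 2)⁻¹,
   FreeGroup.of 1 ^ 4 * (FreeGroup.of 3 ^ 4)⁻¹}

theorem bs_aux {H : Type*} [Group H] (x y z : H) (h1 : x * y ^ 2 * x⁻¹ = y ^ 3)
    (h2 : x * z ^ 2 * x⁻¹ = z ^ 3) (h4 : y ^ 4 = z ^ 4) : y = z := by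
  have k1 : x * y ^ 4 * x⁻¹ = y ^ 6 := by
    have : x * y ^ 4 * x⁻¹ = (x * y ^ 2 * x⁻¹) * (x * y ^ 2 * x⁻¹) := by group
    rw [this, h1]; group
  have k2 : x * z ^ 4 * x⁻¹ = z ^ 6 := by
    have : x * z ^ 4 * x⁻¹ = (x * z ^ 2 * x⁻¹) * (x * z ^ 2 * x⁻¹) := by group
    rw [this, h2]; group
  have k6 : y ^ 6 = z ^ 6 := by rw [← k1, ← k2, h4]
  have e2 : y ^ 2 = z ^ 2 := by
    have a : y ^ 2 = y ^ 6 * (y ^ 4)⁻¹ := by group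
    have b : z ^ 2 = z ^ 6 * (z ^ 4)⁻¹ := by group
    rw [a, b, k6, h4]
  have e3 : y ^ 3 = z ^ 3 := by rw [← h1, ← h2, e2]
  have a : y = y ^ 3 * (y ^ 2)⁻¹ := by group
  have b : z = z ^ 3 * (z ^ 2)⁻¹ := by group
  rw [a, b, e3, e2]

theorem bs_rel : (PresentedGroup.of 0 : BSGroup) * PresentedGroup.of 1 ^ 2 *
    (PresentedGroup.of 0)⁻¹ = PresentedGroup.of 1 ^ 3 := by
  rw [← mul_inv_eq_one]
  exact PresentedGroup.one_of_mem (rels := bsRels) rfl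

abbrev DGrp := PresentedGroup doubledRels

theorem d_rel1 : (PresentedGroup.of 0 : DGrp) * PresentedGroup.of 1 ^ 2 *
    (PresentedGroup.of 0)⁻¹ = PresentedGroup.of 1 ^ 3 := by
  rw [← mul_inv_eq_one]
  exact PresentedGroup.one_of_mem (rels := doubledRels) (Or.inl rfl)

theorem d_rel2 : (PresentedGroup.of 2 : DGrp) * PresentedGroup.of 3 ^ 2 *
    (PresentedGroup.of 2)⁻¹ = PresentedGroup.of 3 ^ 3 := by
  rw [← mul_inv_eq_one]
  exact PresentedGroup.one_of_mem (rels := doubledRels) (Or.inr (Or.inl rfl))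

theorem d_rel3 : (PresentedGroup.of 0 : DGrp) = PresentedGroup.of 2 := by
  rw [← mul_inv_eq_one]
  exact PresentedGroup.one_of_mem (rels := doubledRels) (Or.inr (Or.inr (Or.inl rfl)))

theorem d_rel4 : (PresentedGroup.of 1 : DGrp) ^ 4 = PresentedGroup.of 3 ^ 4 := by
  rw [← mul_inv_eq_one]
  exact PresentedGroup.one_of_mem (rels := doubledRels) (Or.inr (Or.inr (Or.inr rfl)))

theorem d_eq : (PresentedGroup.of 1 : DGrp) = PresentedGroup.of 3 :=
  bs_aux (PresentedGroup.of 0) _ _ d_rel1 (by rw [d_rel3]; exact d_rel2) d_rel4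

def fwdGen : Fin 4 → BSGroup :=
  ![PresentedGroup.of 0, PresentedGroup.of 1, PresentedGroup.of 0, PresentedGroup.of 1]

def bwdGen : Fin 2 → DGrp := ![PresentedGroup.of 0, PresentedGroup.of 1]

theorem fwd_ok : ∀ r ∈ doubledRels, FreeGroup.lift fwdGen r = 1 := by
  rintro r (rfl | rfl | rfl | rfl) <;> simp [fwdGen, bs_rel]

theorem bwd_ok : ∀ r ∈ bsRels, FreeGroup.lift bwdGen r = 1 := by
  rintro r rfl
  simp [bwdGen, d_rel1]

/-- The presented group
`⟨x, y, x′, y′ | x y² x⁻¹ = y³, x′ y′² x′⁻¹ = y′³, x = x′, y⁴ = y′⁴⟩` is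
isomorphic to `G = ⟨x, y | x y² x⁻¹ = y³⟩` via `x ↦ x`, `y ↦ y`, `x′ ↦ x`,
`y′ ↦ y`. -/
theorem doubled_presentation_iso_bs :
    ∃ e : PresentedGroup doubledRels ≃* BSGroup,
      e (PresentedGroup.of 0) = PresentedGroup.of 0 ∧
      e (PresentedGroup.of 1) = PresentedGroup.of 1 ∧
      e (PresentedGroup.of 2) = PresentedGroup.of 0 ∧
      e (PresentedGroup.of 3) = PresentedGroup.of 1 := by
  refine ⟨MonoidHom.toMulEquiv (PresentedGroup.toGroup fwd_ok) (PresentedGroup.toGroup bwd_ok)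
    ?_ ?_, ?_, ?_, ?_, ?_⟩
  · ext i
    fin_cases i <;> simp [fwdGen, bwdGen, d_rel3, d_eq]
  · ext i
    fin_cases i <;> simp [fwdGen, bwdGen]
  all_goals simp [fwdGen]
end

section
/- Let T = ⟨x, y | x² = y³⟩ be the trefoil group. For every natural number i, the two elements x^{2i+1} and y^{3i+1} generate T. -/
/-- The single relator `x² y⁻³` in the free group on two generators. -/
def trefoilRels : Set (FreeGroup (Fin 2)) :=
  {FreeGroup.of 0 ^ 2 * (FreeGroup.of 1 ^ 3)⁻¹}

/-- The trefoil group `T = ⟨x, y | x² = y³⟩`. -/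
abbrev TrefoilGroup := PresentedGroup trefoilRels

/-- In the trefoil group `T = ⟨x, y | x² = y³⟩`, for every natural number `i`
the elements `x^(2i+1)` and `y^(3i+1)` generate `T`. -/
theorem trefoil_generated_by_odd_powers (i : ℕ) :
    Subgroup.closure
      ({(PresentedGroup.of 0 : TrefoilGroup) ^ (2 * i + 1),
        (PresentedGroup.of 1 : TrefoilGroup) ^ (3 * i + 1)} : Set TrefoilGroup) = ⊤ := by
  set x : TrefoilGroup := PresentedGroup.of 0 with hx
  set y : TrefoilGroup := PresentedGroup.of 1 with hy
  have hrel : x ^ 2 = y ^ 3 := by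
    have h : PresentedGroup.mk trefoilRels
        (FreeGroup.of 0 ^ 2 * (FreeGroup.of 1 ^ 3)⁻¹) = 1 :=
      PresentedGroup.one_of_mem (Set.mem_singleton _)
    rw [map_mul, map_inv, map_pow, map_pow] at h
    exact mul_inv_eq_one.mp h
  set H := Subgroup.closure ({x ^ (2 * i + 1), y ^ (3 * i + 1)} : Set TrefoilGroup) with hH
  have ha : x ^ (2 * i + 1) ∈ H := Subgroup.subset_closure (by simp)
  have hb : y ^ (3 * i + 1) ∈ H := Subgroup.subset_closure (by simp)
  have hc : x ^ 2 ∈ H := by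
    have h1 : (x ^ (2 * i + 1)) ^ 6 = x ^ 2 * (y ^ (3 * i + 1)) ^ 6 := by
      have h2 : (y ^ (3 * i + 1)) ^ 6 = (y ^ 3) ^ (6 * i + 2) := by
        rw [← pow_mul, ← pow_mul]; congr 1; ring
      rw [h2, ← hrel, ← pow_mul, ← pow_mul, ← pow_add]; congr 1; ring
    have h3 := H.mul_mem (H.pow_mem ha 6) (H.inv_mem (H.pow_mem hb 6))
    rwa [h1, mul_inv_cancel_right] at h3
  have hxm : x ∈ H := by
    rw [pow_succ, pow_mul] at ha
    exact (H.mul_mem_cancel_left (H.pow_mem hc i)).mp ha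
  have hym : y ∈ H := by
    rw [pow_succ, pow_mul, ← hrel] at hb
    exact (H.mul_mem_cancel_left (H.pow_mem hc i)).mp hb
  rw [eq_top_iff, ← PresentedGroup.closure_range_of trefoilRels, Subgroup.closure_le]
  rintro _ ⟨j, rfl⟩
  fin_cases j
  · exact hxm
  · exact hym
end

section
/- Let T = ⟨x, y | x² = y³⟩ be the trefoil group and let i be a natural number. Then the presented group ⟨ x, y, x′, y′ | x² = y³, x′² = y′³, x^{2i+1} = x′^{2i+1}, y^{3i+1} = y′^{3i+1} ⟩ is isomorphic to T, via the map sending x ↦ x, y ↦ y, x′ ↦ x, y′ ↦ y. -/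
/-- The relators `x² y⁻³`, `x′² y′⁻³`, `x^(2i+1) x′^(-(2i+1))`,
`y^(3i+1) y′^(-(3i+1))` in the free group on four generators
`x = 0`, `y = 1`, `x′ = 2`, `y′ = 3`. -/
def trefoilDoubledRels (i : ℕ) : Set (FreeGroup (Fin 4)) :=
  {FreeGroup.of 0 ^ 2 * (FreeGroup.of 1 ^ 3)⁻¹,
   FreeGroup.of 2 ^ 2 * (FreeGroup.of 3 ^ 3)⁻¹,
   FreeGroup.of 0 ^ (2 * i + 1) * (FreeGroup.of 2 ^ (2 * i + 1))⁻¹,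
   FreeGroup.of 1 ^ (3 * i + 1) * (FreeGroup.of 3 ^ (3 * i + 1))⁻¹}


theorem trefoil_aux {G : Type*} [Group G] (i : ℕ) (x y x' y' : G)
    (h1 : x ^ 2 = y ^ 3) (h2 : x' ^ 2 = y' ^ 3)
    (h3 : x ^ (2 * i + 1) = x' ^ (2 * i + 1))
    (h4 : y ^ (3 * i + 1) = y' ^ (3 * i + 1)) : x = x' ∧ y = y' := by
  have e1 : (x ^ 2) ^ (2 * i + 1) = (x' ^ 2) ^ (2 * i + 1) := by
    rw [← pow_mul, ← pow_mul, mul_comm, pow_mul, pow_mul, h3]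
  have e2 : (x ^ 2) ^ (3 * i + 1) = (x' ^ 2) ^ (3 * i + 1) := by
    rw [h1, h2, ← pow_mul, ← pow_mul, mul_comm, pow_mul, pow_mul, h4]
  have key : ∀ z : G, z * (z ^ (3 * i + 1)) ^ 2 = (z ^ (2 * i + 1)) ^ 3 := by
    intro z
    rw [← pow_mul, ← pow_mul, ← pow_succ']
    congr 1
    ring
  have hz : x ^ 2 = x' ^ 2 := by
    have a := key (x ^ 2)
    rw [e1, e2, ← key (x' ^ 2)] at a
    exact mul_right_cancel a
  have hz' : y ^ 3 = y' ^ 3 := by rw [← h1, ← h2, hz]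
  constructor
  · rw [pow_succ, pow_succ, pow_mul, pow_mul, hz] at h3
    exact mul_left_cancel h3
  · rw [pow_succ, pow_succ, pow_mul, pow_mul, hz'] at h4
    exact mul_left_cancel h4

theorem trefoil_rel {α : Type*} {rels : Set (FreeGroup α)} {a b : α} {m n : ℕ}
    (h : FreeGroup.of a ^ m * (FreeGroup.of b ^ n)⁻¹ ∈ rels) :
    (PresentedGroup.of a : PresentedGroup rels) ^ m = PresentedGroup.of b ^ n := by
  have := PresentedGroup.one_of_mem h
  rw [map_mul, map_inv, map_pow, map_pow, mul_inv_eq_one] at this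
  exact this

theorem trefoil_doubled_presentation_iso (i : ℕ) :
    ∃ e : PresentedGroup (trefoilDoubledRels i) ≃* TrefoilGroup,
      e (PresentedGroup.of 0) = PresentedGroup.of 0 ∧
      e (PresentedGroup.of 1) = PresentedGroup.of 1 ∧
      e (PresentedGroup.of 2) = PresentedGroup.of 0 ∧
      e (PresentedGroup.of 3) = PresentedGroup.of 1 := by
  have hT : (PresentedGroup.of 0 : TrefoilGroup) ^ 2 = PresentedGroup.of 1 ^ 3 :=
    trefoil_rel (by simp [trefoilRels])
  have r1 : (PresentedGroup.of 0 : PresentedGroup (trefoilDoubledRels i)) ^ 2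
      = PresentedGroup.of 1 ^ 3 := trefoil_rel (by simp [trefoilDoubledRels])
  obtain ⟨hx, hy⟩ := trefoil_aux i
    (PresentedGroup.of 0 : PresentedGroup (trefoilDoubledRels i))
    (PresentedGroup.of 1) (PresentedGroup.of 2) (PresentedGroup.of 3) r1
    (trefoil_rel (by simp [trefoilDoubledRels]))
    (trefoil_rel (by simp [trefoilDoubledRels]))
    (trefoil_rel (by simp [trefoilDoubledRels]))
  let f : PresentedGroup (trefoilDoubledRels i) →* TrefoilGroup :=
    PresentedGroup.toGroup (f := ![PresentedGroup.of 0, PresentedGroup.of 1,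
      PresentedGroup.of 0, PresentedGroup.of 1]) (by
        intro r hr
        simp only [trefoilDoubledRels, Set.mem_insert_iff, Set.mem_singleton_iff] at hr
        rcases hr with rfl | rfl | rfl | rfl <;> simp [hT])
  let g : TrefoilGroup →* PresentedGroup (trefoilDoubledRels i) :=
    PresentedGroup.toGroup (f := ![PresentedGroup.of 0, PresentedGroup.of 1]) (by
        intro r hr
        simp only [trefoilRels, Set.mem_singleton_iff] at hr
        subst hr
        simp [r1])
  have f0 : f (PresentedGroup.of 0) = PresentedGroup.of 0 := by simp [f]
  have f1 : f (PresentedGroup.of 1) = PresentedGroup.of 1 := by simp [f]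
  have f2 : f (PresentedGroup.of 2) = PresentedGroup.of 0 := by simp [f]
  have f3 : f (PresentedGroup.of 3) = PresentedGroup.of 1 := by simp [f]
  have g0 : g (PresentedGroup.of 0) = PresentedGroup.of 0 := by simp [g]
  have g1 : g (PresentedGroup.of 1) = PresentedGroup.of 1 := by simp [g]
  refine ⟨MonoidHom.toMulEquiv f g ?_ ?_, f0, f1, f2, f3⟩
  · refine PresentedGroup.ext fun k => ?_
    fin_cases k
    · exact (congrArg g f0).trans g0
    · exact (congrArg g f1).trans g1
    · exact (congrArg g f2).trans (g0.trans hx)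
    · exact (congrArg g f3).trans (g1.trans hy)
  · refine PresentedGroup.ext fun k => ?_
    fin_cases k
    · exact (congrArg f g0).trans f0
    · exact (congrArg f g1).trans f1
end
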